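/- Let G be a finite abelian group and H a subgroup of G. Then Ol(G) ≥ Ol(G/H) + Ol(H) − 1. -/

import Mathlib

open Multiset

/-- A sequence (finite multiset) over `G` is zero-sumfree if every nonempty
subsequence has nonzero sum. -/
def IsZeroSumfree {G : Type*} [AddCommMonoid G] (S : Multiset G) : Prop :=
  ∀ T ≤ S, T ≠ 0 → T.sum ≠ 0

/-- A minimal zero-sum sequence: a nonempty sequence with sum zero all of whose
nonempty proper subsequences have nonzero sum. -/
def IsMinimalZeroSum {G : Type*} [AddCommMonoid G] (S : Multiset G) : Prop :=
  S ≠ 0 ∧ S.sum = 0 ∧ ∀ T ≤ S, T ≠ 0 → T ≠ S → T.sum ≠ 0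

/-- The cumulated multiplicity of level `ℓ` of a sequence:
`cm_ℓ(S) = Σ_{g ∈ G} max {0, v_g(S) − ℓ}`. -/
noncomputable def cmul {G : Type*} [AddCommMonoid G] (ℓ : ℕ) (S : Multiset G) : ℕ :=
  letI := Classical.decEq G
  ∑ g ∈ S.toFinset, (S.count g - ℓ)

/-- `SD_{(k,ℓ)}(G)`: the maximum length of a minimal zero-sum sequence `S` over `G`
with `cm_ℓ(S) ≤ k`. -/
noncomputable def SDpair (G : Type*) [AddCommMonoid G] (k ℓ : ℕ) : ℕ :=
  sSup {m | ∃ S : Multiset G, IsMinimalZeroSum S ∧ cmul ℓ S ≤ k ∧ Multiset.card S = m}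

/-- `SD_k(G)`: the `k`-th Strong Davenport constant. -/
noncomputable def SDk (G : Type*) [AddCommMonoid G] (k : ℕ) : ℕ := SDpair G k 1

/-- The Strong Davenport constant `SD(G) = SD_0(G)`. -/
noncomputable def SD (G : Type*) [AddCommMonoid G] : ℕ := SDk G 0

/-- The Olson constant `Ol(G) = SD_1(G)`. -/
noncomputable def Ol (G : Type*) [AddCommMonoid G] : ℕ := SDk G 1

/-- `ol_k(G)`: the maximum length of a zero-sumfree sequence `S` over `G` with
`cm(S) ≤ k`. -/
noncomputable def olk (G : Type*) [AddCommMonoid G] (k : ℕ) : ℕ :=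
  sSup {m | ∃ S : Multiset G, IsZeroSumfree S ∧ cmul 1 S ≤ k ∧ Multiset.card S = m}

/-- `Ol_k(G)`: the smallest integer `ℓ` such that every sequence `S` over `G` with
`cm(S) ≤ k` and `|S| ≥ ℓ` has a nonempty zero-sum subsequence. -/
noncomputable def Olk (G : Type*) [AddCommMonoid G] (k : ℕ) : ℕ :=
  sInf {m | ∀ S : Multiset G, cmul 1 S ≤ k → m ≤ Multiset.card S →
    ∃ T, T ≤ S ∧ T ≠ 0 ∧ T.sum = 0}

/-- The Davenport constant `D(G)`: the maximum length of a minimal zero-sum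
sequence over `G`. -/
noncomputable def DavenportD (G : Type*) [AddCommMonoid G] : ℕ :=
  sSup {m | ∃ S : Multiset G, IsMinimalZeroSum S ∧ Multiset.card S = m}

/-!
`Ol(G) - 1` is the largest size of a zero-sumfree subset of `G`: appending `-σ(T)` to a zero-sumfree
set `T` gives a minimal zero-sum sequence in which at most one element is repeated, and conversely
such a sequence becomes a zero-sumfree set on deleting one well-chosen term. Given zero-sumfree sets
in `G/H` and in `H`, lift the first one to `G` and adjoin the second: the image in `G/H` of a
zero-sum subsequence shows that it uses no lifted term, so it lies in `H`, where it must be empty.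
-/

section Multiplicity

variable {G : Type*} [AddCommMonoid G]

theorem cmul_one_add_card_dedup [DecidableEq G] (S : Multiset G) :
    cmul 1 S + card S.dedup = card S := by
  have cmul_eq : cmul 1 S = ∑ g ∈ S.toFinset, (S.count g - 1) := by
    unfold cmul
    congr!
  have card_dedup_eq : card S.dedup = ∑ _g ∈ S.toFinset, 1 := Finset.card_eq_sum_ones S.toFinset
  rw [cmul_eq, card_dedup_eq, ← Finset.sum_add_distrib, ← toFinset_sum_count_eq S]
  exact Finset.sum_congr rfl fun g hg =>
    Nat.sub_add_cancel (one_le_count_iff_mem.2 (mem_toFinset.1 hg))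

theorem cmul_one_eq_zero_of_nodup {S : Multiset G} (hS : S.Nodup) : cmul 1 S = 0 := by
  classical
  have card_eq := cmul_one_add_card_dedup S
  rwa [hS.dedup, Nat.add_eq_right] at card_eq

theorem cmul_one_cons_le (a : G) (S : Multiset G) : cmul 1 (a ::ₘ S) ≤ cmul 1 S + 1 := by
  classical
  have card_eq := cmul_one_add_card_dedup S
  have card_cons_eq := cmul_one_add_card_dedup (a ::ₘ S)
  have card_dedup_le : card S.dedup ≤ card (a ::ₘ S).dedup :=
    card_le_card (le_dedup.2 ⟨(dedup_le S).trans (le_cons_self S a), nodup_dedup S⟩)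
  rw [card_cons] at card_cons_eq
  lia

theorem cmul_one_cons_le_one_of_nodup (a : G) {S : Multiset G} (hS : S.Nodup) :
    cmul 1 (a ::ₘ S) ≤ 1 := by
  simpa only [cmul_one_eq_zero_of_nodup hS] using cmul_one_cons_le a S

theorem card_le_cmul_one_add_natCard [Finite G] (S : Multiset G) :
    card S ≤ cmul 1 S + Nat.card G := by
  classical
  have := Fintype.ofFinite G
  rw [← cmul_one_add_card_dedup S, Nat.card_eq_fintype_card]
  gcongr
  exact S.toFinset.card_le_univ

end Multiplicity

section ZeroSumfree

theorem exists_le_map_eq_of_le_map {α β : Type*} {f : α → β} {S : Multiset α} {T : Multiset β}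
    (hT : T ≤ S.map f) : ∃ U ≤ S, U.map f = T := by
  induction S using Quotient.inductionOn with | _ l
  induction T using Quotient.inductionOn with | _ t
  obtain ⟨t', ht', ht'_sub⟩ := hT
  obtain ⟨u, hu, rfl⟩ := List.sublist_map_iff.1 ht'_sub
  exact ⟨u, hu.subperm, coe_eq_coe.2 ht'⟩

variable {G K : Type*} [AddCommMonoid G] [AddCommMonoid K]

theorem isZeroSumfree_zero : IsZeroSumfree (0 : Multiset G) :=
  fun _ hT hT0 => absurd (Multiset.le_zero.1 hT) hT0

namespace IsZeroSumfree

theorem zero_notMem {S : Multiset G} (hS : IsZeroSumfree S) : 0 ∉ S := fun h =>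
  hS {0} (singleton_le.2 h) (singleton_ne_zero 0) (sum_singleton 0)

theorem map {S : Multiset G} (hS : IsZeroSumfree S) {f : G →+ K} (hf : Function.Injective f) :
    IsZeroSumfree (S.map f) := by
  intro T hT hT0 hsum
  obtain ⟨U, hU, rfl⟩ := exists_le_map_eq_of_le_map hT
  refine hS U hU (mt Multiset.map_eq_zero.2 hT0) (hf ?_)
  rw [map_multiset_sum, hsum, _root_.map_zero]

theorem add_of_map {S T : Multiset G} {f : G →+ K} (hS : IsZeroSumfree (S.map f))
    (hT : IsZeroSumfree T) (hfT : ∀ g ∈ T, f g = 0) : IsZeroSumfree (S + T) := by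
  classical
  intro U hU hU0 hsum
  have sub_le : U - S ≤ T := tsub_le_iff_left.2 hU
  have map_sum_sub : f (U - S).sum = 0 := by
    rw [map_multiset_sum]
    exact sum_eq_zero fun _ hx =>
      let ⟨g, hg, hgx⟩ := mem_map.1 hx
      hgx ▸ hfT g (mem_of_le sub_le hg)
  have sum_map_inter : ((U ∩ S).map f).sum = 0 := by
    calc
      ((U ∩ S).map f).sum = f (U - S).sum + f (U ∩ S).sum := by
        rw [map_sum_sub, zero_add, map_multiset_sum]
      _ = f U.sum := by rw [← _root_.map_add, ← sum_add, sub_add_inter]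
      _ = 0 := by rw [hsum, _root_.map_zero]
  have inter_eq_zero : U ∩ S = 0 := by
    by_contra inter_ne_zero
    exact hS _ (map_le_map inter_le_right) (mt Multiset.map_eq_zero.1 inter_ne_zero) sum_map_inter
  have sub_eq : U - S = U := by
    simpa only [inter_eq_zero, add_zero] using sub_add_inter U S
  exact hT U (sub_eq ▸ sub_le) hU0 hsum

theorem disjoint_of_map {S T : Multiset G} {f : G →+ K} (hS : IsZeroSumfree (S.map f))
    (hfT : ∀ g ∈ T, f g = 0) : Disjoint S T :=
  disjoint_left.2 fun hgS hgT => hS.zero_notMem (hfT _ hgT ▸ mem_map_of_mem f hgS)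

end IsZeroSumfree

end ZeroSumfree

theorem IsMinimalZeroSum.isZeroSumfree_of_lt {G : Type*} [AddCommMonoid G] {S T : Multiset G}
    (hS : IsMinimalZeroSum S) (hT : T < S) : IsZeroSumfree T :=
  fun U hU hU0 => hS.2.2 U (hU.trans hT.le) hU0 (hU.trans_lt hT).ne

theorem IsMinimalZeroSum.exists_nodup_isZeroSumfree {G : Type*} [AddCommMonoid G]
    {S : Multiset G} (hS : IsMinimalZeroSum S) :
    ∃ T : Multiset G, T.Nodup ∧ IsZeroSumfree T ∧ card S ≤ card T + max 1 (cmul 1 S) := by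
  classical
  by_cases hnodup : S.Nodup
  · obtain ⟨a, ha⟩ := exists_mem_of_ne_zero hS.1
    refine ⟨S.erase a, hnodup.erase a, hS.isZeroSumfree_of_lt (erase_lt.2 ha), ?_⟩
    rw [← card_erase_add_one ha]
    gcongr
    exact le_max_left _ _
  · have dedup_lt : S.dedup < S := (dedup_le S).lt_of_ne (mt dedup_eq_self.1 hnodup)
    refine ⟨S.dedup, S.nodup_dedup, hS.isZeroSumfree_of_lt dedup_lt, ?_⟩
    rw [← cmul_one_add_card_dedup S, add_comm]
    gcongr
    exact le_max_right _ _

theorem IsZeroSumfree.isMinimalZeroSum_cons {G : Type*} [AddCommGroup G] {T : Multiset G}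
    (hT : IsZeroSumfree T) : IsMinimalZeroSum (-T.sum ::ₘ T) := by
  refine ⟨cons_ne_zero, by rw [sum_cons, neg_add_cancel], fun U hU hU0 hU_ne hsum => ?_⟩
  by_cases hmem : -T.sum ∈ U
  · obtain ⟨V, rfl⟩ := exists_cons_of_mem hmem
    -- The complement of `U` is then a zero-sum subsequence of `T`.
    obtain ⟨W, rfl⟩ := Multiset.le_iff_exists_add.1 ((cons_le_cons_iff _).1 hU)
    have hW0 : W ≠ 0 := by
      rintro rfl
      exact hU_ne (by rw [add_zero])
    refine hT W (Multiset.le_add_left W V) hW0 ?_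
    rwa [sum_cons, sum_add, neg_add_rev, neg_add_cancel_right, neg_eq_zero] at hsum
  · exact hT U ((le_cons_of_notMem hmem).1 hU) hU0 hsum

theorem bddAbove_card_isMinimalZeroSum (G : Type*) [AddCommMonoid G] [Finite G] (k : ℕ) :
    BddAbove {m | ∃ S : Multiset G, IsMinimalZeroSum S ∧ cmul 1 S ≤ k ∧ card S = m} := by
  refine ⟨k + Nat.card G, ?_⟩
  rintro _ ⟨S, -, hcmul, rfl⟩
  exact (card_le_cmul_one_add_natCard S).trans (by gcongr)

theorem IsZeroSumfree.card_add_one_le_ol {G : Type*} [AddCommGroup G] [Finite G]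
    {T : Multiset G} (hT : IsZeroSumfree T) (hnodup : T.Nodup) : card T + 1 ≤ Ol G :=
  le_csSup (bddAbove_card_isMinimalZeroSum G 1)
    ⟨_, hT.isMinimalZeroSum_cons, cmul_one_cons_le_one_of_nodup _ hnodup, card_cons _ _⟩

theorem exists_nodup_isZeroSumfree_card_add_one_eq_ol (G : Type*) [AddCommGroup G] [Finite G] :
    ∃ T : Multiset G, T.Nodup ∧ IsZeroSumfree T ∧ card T + 1 = Ol G := by
  obtain ⟨S, hS, hcmul, hcard⟩ :
      Ol G ∈ {m | ∃ S : Multiset G, IsMinimalZeroSum S ∧ cmul 1 S ≤ 1 ∧ card S = m} :=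
    Nat.sSup_mem ⟨_, _, isZeroSumfree_zero.isMinimalZeroSum_cons,
      cmul_one_cons_le_one_of_nodup _ nodup_zero, rfl⟩ (bddAbove_card_isMinimalZeroSum G 1)
  obtain ⟨T, hnodup, hT, hcard_le⟩ := hS.exists_nodup_isZeroSumfree
  rw [hcard, max_eq_left hcmul] at hcard_le
  exact ⟨T, hnodup, hT, (hT.card_add_one_le_ol hnodup).antisymm hcard_le⟩

/-- For a finite abelian group `G` and a subgroup `H`:
`Ol(G) ≥ Ol(G/H) + Ol(H) − 1`. -/
theorem olson_ge_quotient_add_subgroup (G : Type*) [AddCommGroup G] [Fintype G]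
    (H : AddSubgroup G) :
    Ol (G ⧸ H) + Ol H ≤ Ol G + 1 := by
  obtain ⟨A, hA_nodup, hA, hA_card⟩ := exists_nodup_isZeroSumfree_card_add_one_eq_ol (G ⧸ H)
  obtain ⟨B, hB_nodup, hB, hB_card⟩ := exists_nodup_isZeroSumfree_card_add_one_eq_ol H
  obtain ⟨S, rfl⟩ := map_surjective_of_surjective (QuotientAddGroup.mk'_surjective H) A
  have mk_eq_zero : ∀ g ∈ B.map H.subtype, QuotientAddGroup.mk' H g = 0 := by
    intro g hg
    obtain ⟨b, -, rfl⟩ := mem_map.1 hg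
    exact (QuotientAddGroup.eq_zero_iff _).2 b.2
  have nodup_add : (S + B.map H.subtype).Nodup :=
    Multiset.nodup_add.2 ⟨hA_nodup.of_map, hB_nodup.map H.subtype_injective,
      hA.disjoint_of_map mk_eq_zero⟩
  have isZeroSumfree_add : IsZeroSumfree (S + B.map H.subtype) :=
    hA.add_of_map (hB.map H.subtype_injective) mk_eq_zero
  have card_le := isZeroSumfree_add.card_add_one_le_ol nodup_add
  rw [card_add, card_map] at card_le
  rw [card_map] at hA_card
  lia
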